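/- Let k ≥ 2 and j ∈ {1,…,k−1}. Let ω = ω(n) be a function with ω → ∞ and ω = o(log n), and let p = p(n) satisfy p_j^− ≤ p ≤ ((j+1)·log n + log log n − ω)·(k−j)!/((k−j+1)·n^{k−j}), where p_j^− := (1 − 1/√(log n))·(j+1)·(log n)·(k−j)!/((k−j+1)·n^{k−j}). Let X_- be the number of copies of M_j^- in G_p. Then E[X_-] = Ω(e^ω) (there is a constant c > 0 with E[X_-] ≥ c·e^ω for all sufficiently large n), and for every ε > 0, Pr(|X_- − E[X_-]| ≤ ε·E[X_-]) → 1 as n → ∞. -/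

import Mathlib

open MeasureTheory Filter

attribute [local instance] Classical.propDecidable

namespace RSC

variable {V : Type*}

/-- `A` is an `i`-dimensional simplex of the complex `G`. -/
def IsSimplex (G : Set (Finset V)) (i : ℕ) (A : Finset V) : Prop :=
  A ∈ G ∧ A.card = i + 1

/-- A `k`-dimensional simplicial complex on vertex set `V`. -/
structure IsKComplex (G : Set (Finset V)) (k : ℕ) : Prop where
  down : ∀ A ∈ G, ∀ B, B ⊆ A → B.Nonempty → B ∈ G
  singletons : ∀ v : V, ({v} : Finset V) ∈ G
  dim : ∀ A ∈ G, A.card ≤ k + 1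

/-- `i`-cochains with `F₂`-coefficients. -/
abbrev Cochain (G : Set (Finset V)) (i : ℕ) : Type _ :=
  {A : Finset V // IsSimplex G i A} → ZMod 2

/-- The coboundary map `δ^i : C^i(G) → C^{i+1}(G)`. -/
noncomputable def coboundary (G : Set (Finset V)) (i : ℕ) :
    Cochain G i →ₗ[ZMod 2] Cochain G (i + 1) where
  toFun f := fun σ => ∑ τ ∈ Finset.powersetCard (i + 1) (σ : Finset V),
      if h : IsSimplex G i τ then f ⟨τ, h⟩ else 0
  map_add' f g := by
    funext σ
    simp only [Pi.add_apply, ← Finset.sum_add_distrib]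
    refine Finset.sum_congr rfl fun τ _ => ?_
    by_cases h : IsSimplex G i τ <;> simp [h]
  map_smul' c f := by
    funext σ
    simp only [Pi.smul_apply, RingHom.id_apply, Finset.smul_sum]
    refine Finset.sum_congr rfl fun τ _ => ?_
    by_cases h : IsSimplex G i τ <;> simp [h]

/-- The submodule of `i`-cocycles. -/
noncomputable def cocycles (G : Set (Finset V)) (i : ℕ) : Submodule (ZMod 2) (Cochain G i) :=
  LinearMap.ker (coboundary G i)

/-- The submodule of `i`-coboundaries (`δ^{-1}` is the zero map). -/
noncomputable def coboundaries (G : Set (Finset V)) : (i : ℕ) → Submodule (ZMod 2) (Cochain G i)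
  | 0 => ⊥
  | (i + 1) => LinearMap.range (coboundary G i)

/-- The `i`-th cohomology group `H^i(G;F₂) = ker δ^i / im δ^{i-1}`. -/
noncomputable abbrev cohomology (G : Set (Finset V)) (i : ℕ) :=
  (cocycles G i) ⧸ ((coboundaries G i).comap (cocycles G i).subtype)

/-- `F₂`-cohomological `j`-connectedness: `H^0 ≅ F₂` and `H^i = 0` for `1 ≤ i ≤ j`. -/
def CohomConnected (G : Set (Finset V)) (j : ℕ) : Prop :=
  Nonempty (cohomology G 0 ≃ₗ[ZMod 2] ZMod 2) ∧
    ∀ i, 1 ≤ i → i ≤ j → Subsingleton (cohomology G i)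

/-- The `j`-flower in `K` with centre `C`: the set of petals `C ∪ {w}`, `w ∈ K \ C`. -/
def Flower [DecidableEq V] (K C : Finset V) : Set (Finset V) :=
  {P | ∃ w ∈ K \ C, P = insert w C}

/-- A copy of `M_j^-`: a `k`-simplex `K` together with a `(j-1)`-simplex `C ⊆ K` such that
each petal of the flower `F(K,C)` is contained in no `k`-simplex other than `K`. -/
def IsMjMinus [DecidableEq V] (G : Set (Finset V)) (k j : ℕ) (K C : Finset V) : Prop :=
  IsSimplex G k K ∧ C ∈ G ∧ C.card = j ∧ C ⊆ K ∧
    ∀ P ∈ Flower K C, ∀ K', IsSimplex G k K' → P ⊆ K' → K' = K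

/-- A `j`-cycle: every `(j-1)`-simplex lies in an even number of members of `J`. -/
def IsCycle (G : Set (Finset V)) (j : ℕ) (J : Finset (Finset V)) : Prop :=
  (∀ σ ∈ J, IsSimplex G j σ) ∧
    ∀ τ : Finset V, τ.card = j → Even (J.filter (fun σ => τ ⊆ σ)).card

/-- A copy of `M_j`. -/
def IsMj [DecidableEq V] (G : Set (Finset V)) (k j : ℕ) (K C : Finset V)
    (J : Finset (Finset V)) : Prop :=
  IsMjMinus G k j K C ∧ IsCycle G j J ∧ ∃! P : Finset V, P ∈ J ∧ P ∈ Flower K C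

/-- A `j`-shell: a `(j+2)`-set all of whose `(j+1)`-subsets are `j`-simplices. -/
def IsShell (G : Set (Finset V)) (j : ℕ) (A : Finset V) : Prop :=
  A.card = j + 2 ∧ ∀ τ ⊆ A, τ.card = j + 1 → τ ∈ G

/-- A copy of `M_j^*`. -/
def IsMjStar [DecidableEq V] (G : Set (Finset V)) (k j : ℕ) (K C : Finset V) (w a : V) : Prop :=
  IsMjMinus G k j K C ∧ w ∈ K \ C ∧ a ∉ K ∧ IsShell G j (insert a (insert w C))

/-- The support of a cochain. -/
def cochainSupport {G : Set (Finset V)} {i : ℕ} (f : Cochain G i) : Set (Finset V) :=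
  {A | ∃ h : IsSimplex G i A, f ⟨A, h⟩ = 1}

/-- A cochain arising from a copy of `M_j^-`: its support is the flower `F(K,C)`. -/
def ArisesFrom [DecidableEq V] (G : Set (Finset V)) (k j : ℕ) (f : Cochain G j)
    (K C : Finset V) : Prop :=
  IsMjMinus G k j K C ∧ cochainSupport f = Flower K C

/-- A `j`-cocycle generated by copies of `M_j^-`: it differs by a `j`-coboundary from a sum
of `j`-cocycles arising from copies of `M_j^-`. -/
def GeneratedByMjMinus [DecidableEq V] (G : Set (Finset V)) (k j : ℕ) (f : Cochain G j) : Prop :=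
  ∃ (m : ℕ) (fs : Fin m → Cochain G j),
    (∀ i, ∃ K C, ArisesFrom G k j (fs i) K C) ∧
      f - (∑ i, fs i) ∈ coboundaries G j

/-- Membership in `N_G`: a `j`-cocycle not generated by copies of `M_j^-`. -/
def InNG [DecidableEq V] (G : Set (Finset V)) (k j : ℕ) (f : Cochain G j) : Prop :=
  f ∈ cocycles G j ∧ ¬ GeneratedByMjMinus G k j f

/-- Traversability: the transitive closure of "lying in a common `k`-simplex" is `S × S`. -/
def Traversable (G : Set (Finset V)) (k : ℕ) (S : Set (Finset V)) : Prop :=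
  ∀ σ₁ ∈ S, ∀ σ₂ ∈ S,
    Relation.TransGen
      (fun a b => a ∈ S ∧ b ∈ S ∧ ∃ K, IsSimplex G k K ∧ a ⊆ K ∧ b ⊆ K) σ₁ σ₂

/-- A local obstacle: a `k`-simplex containing at least `k-j+1` many `j`-simplices,
each lying in no other `k`-simplex. -/
def IsLocalObstacle (G : Set (Finset V)) (k j : ℕ) (K : Finset V) : Prop :=
  IsSimplex G k K ∧
    k - j + 1 ≤ {σ : Finset V | IsSimplex G j σ ∧ σ ⊆ K ∧
      ∀ K', IsSimplex G k K' → σ ⊆ K' → K' = K}.ncard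

/-- The random complex `G_p` given birth times `t`: all singletons together with all
non-empty subsets of `(k+1)`-sets with birth time at most `p`. -/
def complexAt (k n : ℕ) (t : Finset (Fin n) → ℝ) (p : ℝ) : Set (Finset (Fin n)) :=
  {A | (∃ v, A = {v}) ∨
    (A.Nonempty ∧ ∃ K : Finset (Fin n), K.card = k + 1 ∧ t K ≤ p ∧ A ⊆ K)}

/-- The distribution of birth times: i.i.d. uniform on `[0,1]`. -/
noncomputable def birthMeasure (n : ℕ) : Measure (Finset (Fin n) → ℝ) :=
  Measure.pi fun _ => volume.restrict (Set.Icc (0 : ℝ) 1)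

/-- `p_{M_j}`: the supremum of the probabilities `p ∈ [0,1]` at which `G_p` contains
a copy of `M_j`. -/
noncomputable def pMj (k j n : ℕ) (t : Finset (Fin n) → ℝ) : ℝ :=
  sSup {p : ℝ | p ∈ Set.Icc (0 : ℝ) 1 ∧
    ∃ K C J, IsMj (complexAt k n t p) k j K C J}

/-- The threshold `p_j`. -/
noncomputable def pjThreshold (k j n : ℕ) : ℝ :=
  ((j + 1 : ℝ) * Real.log n + Real.log (Real.log n)) * (Nat.factorial (k - j)) /
    (((k - j + 1 : ℕ) : ℝ) * (n : ℝ) ^ (k - j))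

/-- `p_j^-`. -/
noncomputable def pjMinus (k j n : ℕ) : ℝ :=
  (1 - 1 / Real.sqrt (Real.log n)) * ((j + 1 : ℝ) * Real.log n) * (Nat.factorial (k - j)) /
    (((k - j + 1 : ℕ) : ℝ) * (n : ℝ) ^ (k - j))

/-- `p_{j-1}^-`. -/
noncomputable def pjPrevMinus (k j n : ℕ) : ℝ :=
  (1 - 1 / Real.sqrt (Real.log n)) * ((j : ℝ) * Real.log n) * (Nat.factorial (k - j + 1)) /
    (((k - j + 2 : ℕ) : ℝ) * (n : ℝ) ^ (k - j + 1))

/-- `p_j^{(1)}`. -/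
noncomputable def pjOne (k j n : ℕ) : ℝ :=
  1 / (10 * ((j : ℝ) + 1) * (Nat.choose (k + 1) (j + 1)) * (n : ℝ) ^ (k - j))

/-- The number of copies of `M_j^-` in `G`. -/
noncomputable def countMjMinus (k j : ℕ) {n : ℕ} (G : Set (Finset (Fin n))) : ℕ :=
  {x : Finset (Fin n) × Finset (Fin n) | IsMjMinus G k j x.1 x.2}.ncard

/-- The number of copies of `M_j^*` in `G`. -/
noncomputable def countMjStar (k j : ℕ) {n : ℕ} (G : Set (Finset (Fin n))) : ℕ :=
  {x : Finset (Fin n) × Finset (Fin n) × Fin n × Fin n |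
    IsMjStar G k j x.1 x.2.1 x.2.2.1 x.2.2.2}.ncard

/-- The expected number of copies of `M_j^-` in `G_q`. -/
noncomputable def expectMinus (k j n : ℕ) (q : ℝ) : ℝ :=
  ∫ t, (countMjMinus k j (complexAt k n t q) : ℝ) ∂(birthMeasure n)

/-- The forbidden `(k+1)`-sets for a pair `(K,C)`. -/
noncomputable def Bset (k n : ℕ) (K C : Finset (Fin n)) : Finset (Finset (Fin n)) :=
  Finset.univ.filter (fun K' => K'.card = k + 1 ∧ K' ≠ K ∧ ∃ w ∈ K \ C, insert w C ⊆ K')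

/-- The index set of pairs `(K,C)`. -/
noncomputable def Idx (k j n : ℕ) : Finset (Finset (Fin n) × Finset (Fin n)) :=
  Finset.univ.filter (fun x => x.1.card = k + 1 ∧ x.2.card = j ∧ x.2 ⊆ x.1)

/-- Cylinder events. -/
def cyl {n : ℕ} (p : ℝ) (S T : Finset (Finset (Fin n))) : Set (Finset (Fin n) → ℝ) :=
  {t | (∀ K ∈ S, t K ≤ p) ∧ ∀ K ∈ T, p < t K}

/-- The event that `(K,C)` forms a copy. -/
noncomputable def Aev (k n : ℕ) (p : ℝ) (x : Finset (Fin n) × Finset (Fin n)) :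
    Set (Finset (Fin n) → ℝ) :=
  cyl p {x.1} (Bset k n x.1 x.2)

lemma cyl_eq_pi {n : ℕ} (p : ℝ) (S T : Finset (Finset (Fin n))) (h : Disjoint S T) :
    cyl p S T = Set.pi Set.univ (fun K => if K ∈ S then Set.Iic p else
      if K ∈ T then Set.Ioi p else Set.univ) := by
  ext t
  simp only [cyl, Set.mem_ofPred_eq, Set.mem_pi, Set.mem_univ, true_imp_iff]
  constructor
  · rintro ⟨h1, h2⟩ K
    by_cases hS : K ∈ S
    · simp [hS, h1 K hS]
    · by_cases hT : K ∈ T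
      · simp [hS, hT, h2 K hT]
      · simp [hS, hT]
  · intro H
    refine ⟨fun K hK => ?_, fun K hK => ?_⟩
    · simpa [hK] using H K
    · have : K ∉ S := fun h' => Finset.disjoint_left.mp h h' hK
      simpa [hK, this] using H K

lemma measurableSet_cyl {n : ℕ} (p : ℝ) (S T : Finset (Finset (Fin n))) :
    MeasurableSet (cyl p S T) := by
  unfold cyl
  apply MeasurableSet.inter
  · have : {t : Finset (Fin n) → ℝ | ∀ K ∈ S, t K ≤ p} = ⋂ K ∈ S, {t | t K ≤ p} := by
      ext; simp
    change MeasurableSet {t : Finset (Fin n) → ℝ | ∀ K ∈ S, t K ≤ p}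
    rw [this]
    exact Finset.measurableSet_biInter _ fun K _ =>
      measurableSet_le (measurable_pi_apply K) measurable_const
  · have : {t : Finset (Fin n) → ℝ | ∀ K ∈ T, p < t K} = ⋂ K ∈ T, {t | p < t K} := by
      ext; simp
    change MeasurableSet {t : Finset (Fin n) → ℝ | ∀ K ∈ T, p < t K}
    rw [this]
    exact Finset.measurableSet_biInter _ fun K _ =>
      measurableSet_lt measurable_const (measurable_pi_apply K)

instance unitProb : IsProbabilityMeasure (volume.restrict (Set.Icc (0 : ℝ) 1)) :=
  ⟨by simp⟩

instance birthProb (n : ℕ) : IsProbabilityMeasure (birthMeasure n) := by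
  unfold birthMeasure; infer_instance

lemma measure_cyl {n : ℕ} (p : ℝ) (hp0 : 0 ≤ p) (hp1 : p ≤ 1)
    (S T : Finset (Finset (Fin n))) (h : Disjoint S T) :
    (birthMeasure n).real (cyl p S T) = p ^ S.card * (1 - p) ^ T.card := by
  have hI : (volume.restrict (Set.Icc (0 : ℝ) 1)).real (Set.Iic p) = p := by
    rw [measureReal_restrict_apply measurableSet_Iic]
    have : Set.Iic p ∩ Set.Icc 0 1 = Set.Icc 0 p := by
      ext x; simp only [Set.mem_inter_iff, Set.mem_Iic, Set.mem_Icc]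
      constructor
      · rintro ⟨a, b, c⟩; exact ⟨b, a⟩
      · rintro ⟨a, b⟩; exact ⟨b, a, b.trans hp1⟩
    rw [this]; simp [hp0]
  have hJ : (volume.restrict (Set.Icc (0 : ℝ) 1)).real (Set.Ioi p) = 1 - p := by
    rw [measureReal_restrict_apply measurableSet_Ioi]
    have : Set.Ioi p ∩ Set.Icc 0 1 = Set.Ioc p 1 := by
      ext x; simp only [Set.mem_inter_iff, Set.mem_Ioi, Set.mem_Icc, Set.mem_Ioc]
      constructor
      · rintro ⟨a, b, c⟩; exact ⟨a, c⟩
      · rintro ⟨a, b⟩; exact ⟨a, hp0.trans a.le, b⟩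
    rw [this]; simp [hp1]
  rw [cyl_eq_pi p S T h, Measure.real, birthMeasure, Measure.pi_pi, ENNReal.toReal_prod]
  have : ∀ K : Finset (Fin n), ((volume.restrict (Set.Icc (0 : ℝ) 1))
      (if K ∈ S then Set.Iic p else if K ∈ T then Set.Ioi p else Set.univ)).toReal
      = (if K ∈ S then p else 1) * (if K ∈ T then (1 - p) else 1) := by
    intro K
    by_cases hS : K ∈ S
    · have : K ∉ T := Finset.disjoint_left.mp h hS
      simp only [hS, this, if_true, if_false, mul_one]
      exact hI
    · by_cases hT : K ∈ T
      · simp only [hS, hT, if_true, if_false, one_mul]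
        exact hJ
      · simp only [hS, hT, if_false, mul_one]
        simp
  rw [Finset.prod_congr rfl (fun K _ => this K), Finset.prod_mul_distrib]
  simp [Finset.prod_ite]

lemma isSimplex_iff {k n : ℕ} (hk : 2 ≤ k) (t : Finset (Fin n) → ℝ) (p : ℝ)
    (K : Finset (Fin n)) :
    IsSimplex (complexAt k n t p) k K ↔ K.card = k + 1 ∧ t K ≤ p := by
  unfold IsSimplex complexAt
  constructor
  · rintro ⟨h | ⟨_, K', hK', ht, hs⟩, hc⟩
    · obtain ⟨v, rfl⟩ := h
      simp at hc; omega
    · have : K = K' := Finset.eq_of_subset_of_card_le hs (by omega)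
      subst this
      exact ⟨hc, ht⟩
  · rintro ⟨hc, ht⟩
    refine ⟨Or.inr ⟨?_, K, hc, ht, subset_rfl⟩, hc⟩
    exact Finset.card_pos.mp (by omega)

lemma isMj_iff {k j n : ℕ} (hk : 2 ≤ k) (hj : 1 ≤ j) (t : Finset (Fin n) → ℝ) (p : ℝ)
    (x : Finset (Fin n) × Finset (Fin n)) :
    IsMjMinus (complexAt k n t p) k j x.1 x.2 ↔ x ∈ Idx k j n ∧ t ∈ Aev k n p x := by
  obtain ⟨K, C⟩ := x
  simp only [IsMjMinus, isSimplex_iff hk, Idx, Aev, cyl, Bset, Flower, Finset.mem_filter,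
    Finset.mem_univ, true_and, Finset.mem_singleton, Set.mem_ofPred_eq, forall_eq]
  constructor
  · rintro ⟨⟨hK, ht⟩, _, hC, hs, H⟩
    refine ⟨⟨hK, hC, hs⟩, ht, ?_⟩
    rintro K' ⟨h1, h2, w, hw, hws⟩
    by_contra hlt
    exact h2 (H _ ⟨w, hw, rfl⟩ K' ⟨h1, not_lt.mp hlt⟩ hws)
  · rintro ⟨⟨hK, hC, hs⟩, ht, H⟩
    refine ⟨⟨hK, ht⟩, ?_, hC, hs, ?_⟩
    · exact Or.inr ⟨Finset.card_pos.mp (by omega), K, hK, ht, hs⟩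
    · rintro P ⟨w, hw, rfl⟩ K' ⟨h1, h2⟩ hws
      by_contra hne
      exact absurd h2 (not_le.mpr (H K' ⟨h1, hne, w, hw, hws⟩))

lemma count_eq {k j n : ℕ} (hk : 2 ≤ k) (hj : 1 ≤ j) (t : Finset (Fin n) → ℝ) (p : ℝ) :
    (countMjMinus k j (complexAt k n t p) : ℝ) =
      ∑ x ∈ Idx k j n, (Aev k n p x).indicator (fun _ => (1 : ℝ)) t := by
  unfold countMjMinus
  have : {x : Finset (Fin n) × Finset (Fin n) | IsMjMinus (complexAt k n t p) k j x.1 x.2} =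
      (((Idx k j n).filter (fun x => t ∈ Aev k n p x) : Finset _) : Set _) := by
    ext x
    rw [Set.mem_ofPred_eq, isMj_iff hk hj]
    simp
  rw [this, Set.ncard_coe_finset]
  simp [Set.indicator_apply, Finset.sum_ite]

lemma card_supersets {k n : ℕ} (P : Finset (Fin n)) :
    (Finset.univ.filter (fun K' : Finset (Fin n) => K'.card = k + 1 ∧ P ⊆ K')).card ≤
      n.choose (k + 1 - P.card) := by
  have h : (Finset.powersetCard (k + 1 - P.card) (Finset.univ : Finset (Fin n))).card
      = n.choose (k + 1 - P.card) := by simp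
  rw [← h]
  apply Finset.card_le_card_of_injOn (fun K' => K' \ P)
  · intro K' hK'
    simp only [Finset.coe_filter, Finset.mem_univ, true_and, Set.mem_ofPred_eq] at hK'
    simp only [Finset.mem_coe, Finset.mem_powersetCard, Finset.subset_univ, true_and]
    rw [Finset.card_sdiff_of_subset hK'.2, hK'.1]
  · intro K1 h1 K2 h2 he
    simp only [Finset.coe_filter, Finset.mem_univ, true_and, Set.mem_ofPred_eq] at h1 h2 he
    rw [← Finset.sdiff_union_of_subset h1.2, ← Finset.sdiff_union_of_subset h2.2, he]

lemma card_sdiff_idx {k j n : ℕ} {x : Finset (Fin n) × Finset (Fin n)} (hx : x ∈ Idx k j n) :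
    (x.1 \ x.2).card = k + 1 - j := by
  simp only [Idx, Finset.mem_filter, Finset.mem_univ, true_and] at hx
  rw [Finset.card_sdiff_of_subset hx.2.2, hx.1, hx.2.1]

lemma card_petal {k j n : ℕ} {x : Finset (Fin n) × Finset (Fin n)} (hx : x ∈ Idx k j n)
    {w : Fin n} (hw : w ∈ x.1 \ x.2) : (insert w x.2).card = j + 1 := by
  simp only [Idx, Finset.mem_filter, Finset.mem_univ, true_and] at hx
  rw [Finset.card_insert_of_notMem (Finset.mem_sdiff.mp hw).2, hx.2.1]

lemma card_Bset {k j n : ℕ} {x : Finset (Fin n) × Finset (Fin n)} (hx : x ∈ Idx k j n) :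
    (Bset k n x.1 x.2).card ≤ (k + 1 - j) * n.choose (k - j) := by
  have hsub : Bset k n x.1 x.2 ⊆ (x.1 \ x.2).biUnion (fun w =>
      Finset.univ.filter (fun K' : Finset (Fin n) => K'.card = k + 1 ∧ insert w x.2 ⊆ K')) := by
    intro K' hK'
    simp only [Bset, Finset.mem_filter, Finset.mem_univ, true_and] at hK'
    obtain ⟨h1, h2, w, hw, hs⟩ := hK'
    simp only [Finset.mem_biUnion, Finset.mem_filter, Finset.mem_univ, true_and]
    exact ⟨w, hw, h1, hs⟩
  refine (Finset.card_le_card hsub).trans ?_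
  rw [← card_sdiff_idx hx]
  apply Finset.card_biUnion_le_card_mul
  intro w hw
  refine (card_supersets _).trans ?_
  rw [card_petal hx hw]
  apply le_of_eq; congr 1; omega

lemma card_Bset_inter {k j n : ℕ} (hjk : j < k) {x y : Finset (Fin n) × Finset (Fin n)}
    (hx : x ∈ Idx k j n) (hy : y ∈ Idx k j n)
    (hne : ∀ w ∈ x.1 \ x.2, ∀ w' ∈ y.1 \ y.2, insert w x.2 ≠ insert w' y.2) :
    (Bset k n x.1 x.2 ∩ Bset k n y.1 y.2).card ≤ (k + 1 - j) ^ 2 * n ^ (k - j - 1) := by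
  have hsub : Bset k n x.1 x.2 ∩ Bset k n y.1 y.2 ⊆
      ((x.1 \ x.2) ×ˢ (y.1 \ y.2)).biUnion (fun w =>
      Finset.univ.filter (fun K' : Finset (Fin n) => K'.card = k + 1 ∧
        insert w.1 x.2 ∪ insert w.2 y.2 ⊆ K')) := by
    intro K' hK'
    simp only [Bset, Finset.mem_inter, Finset.mem_filter, Finset.mem_univ, true_and] at hK'
    obtain ⟨⟨h1, h2, w, hw, hs⟩, ⟨_, _, w', hw', hs'⟩⟩ := hK'
    simp only [Finset.mem_biUnion, Finset.mem_filter, Finset.mem_univ, true_and]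
    exact ⟨(w, w'), Finset.mem_product.mpr ⟨hw, hw'⟩, h1, Finset.union_subset hs hs'⟩
  refine (Finset.card_le_card hsub).trans ?_
  have hc : ((x.1 \ x.2) ×ˢ (y.1 \ y.2)).card = (k + 1 - j) ^ 2 := by
    rw [Finset.card_product, card_sdiff_idx hx, card_sdiff_idx hy, sq]
  rw [← hc]
  apply Finset.card_biUnion_le_card_mul
  rintro ⟨w, w'⟩ hw
  obtain ⟨hw1, hw2⟩ := Finset.mem_product.mp hw
  have hP := card_petal hx hw1
  have hP' := card_petal hy hw2
  have hn := hne w hw1 w' hw2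
  simp only at hP hP'
  have hlt : j + 2 ≤ (insert w x.2 ∪ insert w' y.2).card := by
    by_contra hcon
    have h1 : insert w x.2 = insert w x.2 ∪ insert w' y.2 :=
      Finset.eq_of_subset_of_card_le Finset.subset_union_left (by omega)
    have h2 : insert w' y.2 = insert w x.2 ∪ insert w' y.2 :=
      Finset.eq_of_subset_of_card_le Finset.subset_union_right (by omega)
    exact hn (h1.trans h2.symm)
  obtain ⟨Q, hQs, hQ⟩ := Finset.exists_subset_card_eq hlt
  calc _ ≤ (Finset.univ.filter (fun K' : Finset (Fin n) => K'.card = k + 1 ∧ Q ⊆ K')).card := by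
        apply Finset.card_le_card
        intro K' hK'
        simp only [Finset.mem_filter, Finset.mem_univ, true_and] at hK' ⊢
        exact ⟨hK'.1, hQs.trans hK'.2⟩
    _ ≤ n.choose (k + 1 - Q.card) := card_supersets _
    _ ≤ n ^ (k - j - 1) := by
        rw [hQ]
        have : k + 1 - (j + 2) = k - j - 1 := by omega
        rw [this]
        exact Nat.choose_le_pow _ _

lemma notMem_Bset (k n : ℕ) (K C : Finset (Fin n)) : K ∉ Bset k n K C := by
  simp [Bset]

lemma measure_Aev {k n : ℕ} (p : ℝ) (hp0 : 0 ≤ p) (hp1 : p ≤ 1)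
    (x : Finset (Fin n) × Finset (Fin n)) :
    (birthMeasure n).real (Aev k n p x) = p * (1 - p) ^ (Bset k n x.1 x.2).card := by
  unfold Aev
  rw [measure_cyl p hp0 hp1]
  · simp
  · simpa using notMem_Bset k n x.1 x.2

lemma measure_inter {k j n : ℕ} (hjk : j < k) (p : ℝ) (hp0 : 0 ≤ p) (hp1 : p ≤ 1)
    {x y : Finset (Fin n) × Finset (Fin n)}
    (hx : x ∈ Idx k j n) (hy : y ∈ Idx k j n) (hxy : x.1 ≠ y.1) :
    (1 - p) ^ ((k + 1 - j) ^ 2 * n ^ (k - j - 1)) *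
      (birthMeasure n).real (Aev k n p x ∩ Aev k n p y) ≤
    (birthMeasure n).real (Aev k n p x) * (birthMeasure n).real (Aev k n p y) := by
  have hq0 : 0 ≤ 1 - p := by linarith
  have hq1 : 1 - p ≤ 1 := by linarith
  have hint : Aev k n p x ∩ Aev k n p y =
      cyl p {x.1, y.1} (Bset k n x.1 x.2 ∪ Bset k n y.1 y.2) := by
    ext t
    simp only [Aev, cyl, Set.mem_inter_iff, Set.mem_ofPred_eq, Finset.mem_singleton,
      Finset.mem_insert, Finset.mem_union]
    constructor
    · rintro ⟨⟨a, b⟩, c, d⟩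
      exact ⟨fun K h => h.elim (a K) (c K), fun K h => h.elim (b K) (d K)⟩
    · rintro ⟨a, b⟩
      exact ⟨⟨fun K h => a K (Or.inl h), fun K h => b K (Or.inl h)⟩,
        fun K h => a K (Or.inr h), fun K h => b K (Or.inr h)⟩
  by_cases hd : Disjoint ({x.1, y.1} : Finset (Finset (Fin n)))
      (Bset k n x.1 x.2 ∪ Bset k n y.1 y.2)
  · have hyB : y.1 ∉ Bset k n x.1 x.2 := fun h =>
      Finset.disjoint_left.mp hd (by simp) (Finset.mem_union_left _ h)
    have hne : ∀ w ∈ x.1 \ x.2, ∀ w' ∈ y.1 \ y.2, insert w x.2 ≠ insert w' y.2 := by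
      intro w hw w' hw' he
      apply hyB
      simp only [Idx, Finset.mem_filter, Finset.mem_univ, true_and] at hy
      simp only [Bset, Finset.mem_filter, Finset.mem_univ, true_and]
      refine ⟨hy.1, hxy.symm, w, hw, ?_⟩
      rw [he]
      exact Finset.insert_subset (Finset.mem_sdiff.mp hw').1 hy.2.2
    have hI := card_Bset_inter hjk hx hy hne
    rw [hint, measure_cyl p hp0 hp1 _ _ hd, measure_Aev p hp0 hp1, measure_Aev p hp0 hp1,
      Finset.card_pair hxy]
    have hcu := Finset.card_union_add_card_inter (Bset k n x.1 x.2) (Bset k n y.1 y.2)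
    calc _ ≤ (1 - p) ^ (Bset k n x.1 x.2 ∩ Bset k n y.1 y.2).card *
          (p ^ 2 * (1 - p) ^ (Bset k n x.1 x.2 ∪ Bset k n y.1 y.2).card) := by
          apply mul_le_mul_of_nonneg_right (pow_le_pow_of_le_one hq0 hq1 hI)
          positivity
      _ = p ^ 2 * (1 - p) ^ ((Bset k n x.1 x.2 ∪ Bset k n y.1 y.2).card +
          (Bset k n x.1 x.2 ∩ Bset k n y.1 y.2).card) := by
          rw [pow_add]; ring
      _ = _ := by rw [hcu, pow_add]; ring
  · have : Aev k n p x ∩ Aev k n p y = ∅ := by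
      rw [hint]
      rw [Finset.not_disjoint_iff] at hd
      obtain ⟨K, h1, h2⟩ := hd
      ext t
      simp only [cyl, Set.mem_ofPred_eq, Set.mem_empty_iff_false, iff_false]
      rintro ⟨a, b⟩
      exact absurd (a K h1) (not_le.mpr (b K h2))
    rw [this]
    simp only [measureReal_empty, mul_zero]
    positivity

lemma measurableSet_Aev (k n : ℕ) (p : ℝ) (x : Finset (Fin n) × Finset (Fin n)) :
    MeasurableSet (Aev k n p x) := measurableSet_cyl _ _ _

/-- The count as a random variable. -/
noncomputable def Xv (k j n : ℕ) (p : ℝ) : (Finset (Fin n) → ℝ) → ℝ :=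
  fun t => ∑ x ∈ Idx k j n, (Aev k n p x).indicator (fun _ => (1 : ℝ)) t

lemma integrable_ind {n : ℕ} {A : Set (Finset (Fin n) → ℝ)} (hA : MeasurableSet A) :
    Integrable (A.indicator (fun _ => (1 : ℝ))) (birthMeasure n) :=
  (integrable_const 1).indicator hA

lemma expect_eq {k j n : ℕ} (hk : 2 ≤ k) (hj : 1 ≤ j) (p : ℝ) :
    expectMinus k j n p = ∑ x ∈ Idx k j n, (birthMeasure n).real (Aev k n p x) := by
  unfold expectMinus
  simp_rw [count_eq hk hj]
  rw [integral_finsetSum _ (fun x _ => integrable_ind (measurableSet_Aev k n p x))]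
  refine Finset.sum_congr rfl fun x _ => ?_
  rw [integral_indicator_const _ (measurableSet_Aev k n p x)]
  simp

lemma expect_sq {k j n : ℕ} (p : ℝ) :
    ∫ t, (Xv k j n p t) ^ 2 ∂(birthMeasure n) = ∑ x ∈ Idx k j n, ∑ y ∈ Idx k j n,
      (birthMeasure n).real (Aev k n p x ∩ Aev k n p y) := by
  have : ∀ t, (Xv k j n p t) ^ 2 = ∑ x ∈ Idx k j n, ∑ y ∈ Idx k j n,
      (Aev k n p x ∩ Aev k n p y).indicator (fun _ => (1 : ℝ)) t := by
    intro t
    rw [sq, Xv, Finset.sum_mul_sum]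
    refine Finset.sum_congr rfl fun x _ => Finset.sum_congr rfl fun y _ => ?_
    by_cases h1 : t ∈ Aev k n p x <;> by_cases h2 : t ∈ Aev k n p y <;>
      simp [Set.indicator_apply, h1, h2]
  have hm : ∀ x y, MeasurableSet (Aev k n p x ∩ Aev k n p y) := fun x y =>
    (measurableSet_Aev k n p x).inter (measurableSet_Aev k n p y)
  simp_rw [this]
  rw [integral_finsetSum _ (fun x _ => integrable_finsetSum _
    fun y _ => integrable_ind (hm x y))]
  refine Finset.sum_congr rfl fun x _ => ?_
  rw [integral_finsetSum _ (fun y _ => integrable_ind (hm x y))]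
  refine Finset.sum_congr rfl fun y _ => ?_
  rw [integral_indicator_const _ (hm x y)]
  simp

lemma second_moment {k j n : ℕ} (hk : 2 ≤ k) (hj : 1 ≤ j) (hjk : j < k)
    (p : ℝ) (hp0 : 0 ≤ p) (hp1 : p ≤ 1) :
    (1 - p) ^ ((k + 1 - j) ^ 2 * n ^ (k - j - 1)) * ∫ t, (Xv k j n p t) ^ 2 ∂(birthMeasure n) ≤
      expectMinus k j n p ^ 2 + 2 ^ (k + 1) * expectMinus k j n p := by
  have hq0 : 0 ≤ 1 - p := by linarith
  have hq1 : 1 - p ≤ 1 := by linarith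
  set q := (1 - p) ^ ((k + 1 - j) ^ 2 * n ^ (k - j - 1)) with hq
  have hqle : q ≤ 1 := pow_le_one₀ hq0 hq1
  have hqnn : 0 ≤ q := by positivity
  rw [expect_sq, expect_eq hk hj, Finset.mul_sum, sq, Finset.sum_mul_sum, Finset.mul_sum,
    ← Finset.sum_add_distrib]
  refine Finset.sum_le_sum fun x hx => ?_
  rw [Finset.mul_sum]
  have key : ∀ y ∈ Idx k j n, q * (birthMeasure n).real (Aev k n p x ∩ Aev k n p y) ≤
      (birthMeasure n).real (Aev k n p x) * (birthMeasure n).real (Aev k n p y) +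
        (if y.1 = x.1 then (birthMeasure n).real (Aev k n p x) else 0) := by
    intro y hy
    by_cases h : y.1 = x.1
    · simp only [h, if_true]
      have h1 : (birthMeasure n).real (Aev k n p x ∩ Aev k n p y) ≤
        (birthMeasure n).real (Aev k n p x) := measureReal_mono Set.inter_subset_left
      have h2 : 0 ≤ (birthMeasure n).real (Aev k n p x ∩ Aev k n p y) := measureReal_nonneg
      have h3 : 0 ≤ (birthMeasure n).real (Aev k n p x) * (birthMeasure n).real (Aev k n p y) :=
        by positivity
      nlinarith
    · simp only [h, if_false, add_zero]
      exact measure_inter hjk p hp0 hp1 hx hy (Ne.symm h)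
  refine (Finset.sum_le_sum key).trans ?_
  rw [Finset.sum_add_distrib]
  gcongr
  rw [← Finset.sum_filter, Finset.sum_const, nsmul_eq_mul]
  gcongr
  have hc : ((Idx k j n).filter (fun y => y.1 = x.1)).card ≤ 2 ^ (k + 1) := by
    have hxc : x.1.card = k + 1 := by
      simp only [Idx, Finset.mem_filter, Finset.mem_univ, true_and] at hx
      exact hx.1
    rw [← hxc, ← Finset.card_powerset]
    apply Finset.card_le_card_of_injOn Prod.snd
    · intro y hy
      simp only [Idx, Finset.coe_filter, Finset.mem_filter, Finset.mem_univ, true_and,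
        Set.mem_ofPred_eq] at hy
      simp only [Finset.mem_coe, Finset.mem_powerset]
      rw [← hy.2]; exact hy.1.2.2
    · intro y hy z hz he
      simp only [Finset.coe_filter, Set.mem_ofPred_eq] at hy hz
      exact Prod.ext (hy.2.trans hz.2.symm) he
  exact_mod_cast hc

lemma memLp_Xv (k j n : ℕ) (p : ℝ) : MemLp (Xv k j n p) 2 (birthMeasure n) := by
  unfold Xv
  apply memLp_finsetSum
  intro x _
  exact (memLp_const 1).indicator (measurableSet_Aev k n p x)

/-- The Chebyshev bound. -/
lemma cheb {k j n : ℕ} (hk : 2 ≤ k) (hj : 1 ≤ j) (hjk : j < k)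
    (p : ℝ) (hp0 : 0 ≤ p) (hp1 : p < 1) (hE : 0 < expectMinus k j n p) (ε : ℝ) (hε : 0 < ε)
    (q : ℝ) (hq : q = (1 - p) ^ ((k + 1 - j) ^ 2 * n ^ (k - j - 1))) :
    1 - ENNReal.ofReal ((1 / q - 1 + 2 ^ (k + 1) / (q * expectMinus k j n p)) / ε ^ 2) ≤
      birthMeasure n {t : Finset (Fin n) → ℝ |
        |(countMjMinus k j (complexAt k n t p) : ℝ) - expectMinus k j n p| ≤
          ε * expectMinus k j n p} := by
  have hq0 : 0 < q := by
    rw [hq]; exact pow_pos (by linarith) _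
  have hX : ∀ t, (countMjMinus k j (complexAt k n t p) : ℝ) = Xv k j n p t :=
    fun t => count_eq hk hj t p
  have hEX : ∫ t, Xv k j n p t ∂(birthMeasure n) = expectMinus k j n p := by
    unfold expectMinus; simp_rw [hX]
  set E := expectMinus k j n p with hEdef
  have hch := ProbabilityTheory.meas_ge_le_variance_div_sq (memLp_Xv k j n p)
    (mul_pos hε hE)
  have hvar : ProbabilityTheory.variance (Xv k j n p) (birthMeasure n) ≤
      (1 / q - 1) * E ^ 2 + 2 ^ (k + 1) * E / q := by
    rw [ProbabilityTheory.variance_eq_sub (memLp_Xv k j n p), hEX]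
    have h2 := second_moment (n := n) hk hj hjk p hp0 hp1.le
    rw [← hq] at h2
    have : ∫ t, (Xv k j n p t) ^ 2 ∂(birthMeasure n) ≤ (E ^ 2 + 2 ^ (k + 1) * E) / q := by
      rw [le_div_iff₀ hq0, mul_comm]; exact h2
    simp only [Pi.pow_apply]
    calc _ ≤ (E ^ 2 + 2 ^ (k + 1) * E) / q - E ^ 2 := by linarith
      _ = _ := by ring
  rw [hEX] at hch
  have hb : birthMeasure n {t | ε * E ≤ |Xv k j n p t - E|} ≤
      ENNReal.ofReal ((1 / q - 1 + 2 ^ (k + 1) / (q * E)) / ε ^ 2) := by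
    refine hch.trans (ENNReal.ofReal_le_ofReal ?_)
    rw [div_le_iff₀ (by positivity)]
    refine hvar.trans (le_of_eq ?_)
    field_simp
  simp_rw [hX]
  rw [tsub_le_iff_right]
  calc (1 : ENNReal) = birthMeasure n Set.univ := by simp
    _ ≤ birthMeasure n ({t | |Xv k j n p t - E| ≤ ε * E} ∪ {t | ε * E ≤ |Xv k j n p t - E|}) := by
        apply measure_mono
        intro t _
        exact (le_total (|Xv k j n p t - E|) (ε * E)).elim Or.inl Or.inr
    _ ≤ _ := (measure_union_le _ _).trans (by gcongr)

lemma card_Idx {k j n : ℕ} (hjk : j < k) : n.choose (k + 1) ≤ (Idx k j n).card := by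
  have h : (Finset.powersetCard (k + 1) (Finset.univ : Finset (Fin n))).card
      = n.choose (k + 1) := by simp
  rw [← h]
  refine (Finset.card_le_card ?_).trans (Finset.card_image_le (f := Prod.fst))
  intro K hK
  have hK' : K.card = k + 1 := (Finset.mem_powersetCard.mp hK).2
  obtain ⟨C, hC, hc⟩ := Finset.exists_subset_card_eq (show j ≤ K.card by omega)
  refine Finset.mem_image.mpr ⟨(K, C), ?_, rfl⟩
  simp [Idx, hK', hC, hc]

lemma expect_lower {k j n : ℕ} (hk : 2 ≤ k) (hj : 1 ≤ j) (hjk : j < k)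
    (p : ℝ) (hp0 : 0 ≤ p) (hp1 : p ≤ 1) :
    (n.choose (k + 1) : ℝ) * (p * (1 - p) ^ ((k + 1 - j) * n.choose (k - j))) ≤
      expectMinus k j n p := by
  have hq0 : 0 ≤ 1 - p := by linarith
  rw [expect_eq hk hj]
  calc _ ≤ ((Idx k j n).card : ℝ) * (p * (1 - p) ^ ((k + 1 - j) * n.choose (k - j))) := by
        gcongr
        exact card_Idx hjk
    _ = ∑ x ∈ Idx k j n, (p * (1 - p) ^ ((k + 1 - j) * n.choose (k - j))) := by
        rw [Finset.sum_const, nsmul_eq_mul]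
    _ ≤ _ := by
        refine Finset.sum_le_sum fun x hx => ?_
        rw [measure_Aev p hp0 hp1]
        gcongr ?_ * ?_
        exact pow_le_pow_of_le_one hq0 (by linarith) (card_Bset hx)

lemma one_sub_pow_lower (p : ℝ) (hp0 : 0 ≤ p) (hp : p ≤ 1 / 2) (N : ℕ) :
    Real.exp (-(N * p + 2 * p * (N * p))) ≤ (1 - p) ^ N := by
  have h1 : 0 < 1 - p := by linarith
  have h2 := Real.one_sub_inv_le_log_of_pos h1
  have h3 : -(p + 2 * p * p) ≤ 1 - (1 - p)⁻¹ := by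
    have : (1 - p)⁻¹ ≤ 1 + p + 2 * p * p := by
      rw [inv_le_iff_one_le_mul₀ h1]
      nlinarith [mul_nonneg (mul_nonneg hp0 hp0) (by linarith : 0 ≤ 1 - 2 * p)]
    linarith
  rw [← Real.exp_log (pow_pos h1 N), Real.log_pow]
  apply Real.exp_le_exp.mpr
  have hN : (0 : ℝ) ≤ N := by positivity
  nlinarith [mul_le_mul_of_nonneg_left (h3.trans h2) hN]

lemma tendsto_log_div : Tendsto (fun n : ℕ => Real.log n / n) atTop (nhds 0) := by
  have h := Real.isLittleO_log_id_atTop.tendsto_div_nhds_zero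
  exact h.comp tendsto_natCast_atTop_atTop

lemma tendsto_log_sq_div : Tendsto (fun n : ℕ => Real.log n ^ 2 / n) atTop (nhds 0) := by
  have h := (Real.isLittleO_pow_log_id_atTop (n := 2)).tendsto_div_nhds_zero
  exact h.comp tendsto_natCast_atTop_atTop

/-- Basic bounds on `p`. -/
lemma p_bounds (k j : ℕ) (hjk : j < k) (ω : ℕ → ℝ) (hω : Tendsto ω atTop atTop) (p : ℕ → ℝ)
    (hp : ∀ᶠ n : ℕ in atTop, pjMinus k j n ≤ p n ∧
      p n ≤ ((j + 1 : ℝ) * Real.log n + Real.log (Real.log n) - ω n) *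
        (Nat.factorial (k - j)) / (((k - j + 1 : ℕ) : ℝ) * (n : ℝ) ^ (k - j))) :
    ∃ c : ℝ, 0 < c ∧ ∀ᶠ n : ℕ in atTop,
      4 ≤ Real.log n ∧ 2 * (k + 1) ≤ n ∧
      (1 / 2 * (j + 1 : ℝ) * Nat.factorial (k - j) / ((k - j + 1 : ℕ) : ℝ)) *
        Real.log n / (n : ℝ) ^ (k - j) ≤ p n ∧ p n ≤ c * Real.log n / (n : ℝ) ^ (k - j) ∧
      p n ≤ 1 / 2 ∧ 2 * p n * ((j + 1 : ℝ) * Real.log n + Real.log (Real.log n) - ω n) ≤ 1 ∧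
      p n ≤ ((j + 1 : ℝ) * Real.log n + Real.log (Real.log n) - ω n) *
        (Nat.factorial (k - j)) / (((k - j + 1 : ℕ) : ℝ) * (n : ℝ) ^ (k - j)) := by
  set m : ℝ := ((k - j + 1 : ℕ) : ℝ) with hm
  have hm0 : 0 < m := by rw [hm]; positivity
  set F : ℝ := (Nat.factorial (k - j) : ℝ) with hF
  have hF0 : 0 < F := by rw [hF]; positivity
  set c : ℝ := (j + 2 : ℝ) * F / m with hc
  have hc0 : 0 < c := by positivity
  refine ⟨c, hc0, ?_⟩
  have hlog : Tendsto (fun n : ℕ => Real.log n) atTop atTop :=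
    Real.tendsto_log_atTop.comp tendsto_natCast_atTop_atTop
  have e1 : ∀ᶠ n : ℕ in atTop, c * (Real.log n / n) ≤ 1 / 2 := by
    have := tendsto_log_div.const_mul c
    rw [mul_zero] at this
    exact this.eventually_le_const (by norm_num)
  have e2 : ∀ᶠ n : ℕ in atTop, (2 * c * (j + 2)) * (Real.log n ^ 2 / n) ≤ 1 := by
    have := tendsto_log_sq_div.const_mul (2 * c * (j + 2))
    rw [mul_zero] at this
    exact this.eventually_le_const (by norm_num)
  filter_upwards [hp, hlog.eventually_ge_atTop 4, eventually_ge_atTop (2 * (k + 1)),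
    hω.eventually_ge_atTop 0, e1, e2] with n hpn hL hn hwn h1 h2
  set L := Real.log n with hLdef
  have hn0 : (1 : ℝ) ≤ n := by exact_mod_cast (by omega : 1 ≤ n)
  have hnp : (0 : ℝ) < n := by linarith
  have hll : Real.log L ≤ L := (Real.log_le_sub_one_of_pos (by linarith)).trans (by linarith)
  have hW : (j + 1 : ℝ) * L + Real.log L - ω n ≤ (j + 2) * L := by linarith
  have hnd : (n : ℝ) ≤ (n : ℝ) ^ (k - j) := le_self_pow₀ hn0 (by omega)
  have hndp : (0 : ℝ) < (n : ℝ) ^ (k - j) := by positivity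
  have hlow : (1 / 2 * (j + 1 : ℝ) * F / m) * L / (n : ℝ) ^ (k - j) ≤ p n := by
    refine le_trans ?_ hpn.1
    unfold pjMinus
    have hs : (2 : ℝ) ≤ Real.sqrt L := by
      apply Real.le_sqrt_of_sq_le; linarith
    have hs2 : (1 / 2 : ℝ) ≤ 1 - 1 / Real.sqrt L := by
      have : 1 / Real.sqrt L ≤ 1 / 2 := one_div_le_one_div_of_le (by norm_num) hs
      linarith
    calc _ = (1 / 2 : ℝ) * ((j + 1 : ℝ) * L) * F / (m * (n : ℝ) ^ (k - j)) := by
          field_simp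
      _ ≤ _ := by gcongr
  have hup : p n ≤ c * L / (n : ℝ) ^ (k - j) := by
    refine hpn.2.trans ?_
    calc _ ≤ ((j + 2) * L) * F / (m * (n : ℝ) ^ (k - j)) := by gcongr
      _ = _ := by rw [hc]; field_simp
  have hup' : p n ≤ c * (L / n) := by
    refine hup.trans ?_
    rw [← mul_div_assoc]
    gcongr
  have hp0 : 0 ≤ p n := le_trans (by positivity) hlow
  refine ⟨hL, hn, hlow, hup, hup'.trans h1, ?_, hpn.2⟩
  calc _ ≤ 2 * p n * ((j + 2) * L) := by gcongr
    _ ≤ 2 * (c * (L / n)) * ((j + 2) * L) := by gcongr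
    _ = (2 * c * (j + 2)) * (L ^ 2 / n) := by ring
    _ ≤ 1 := h2

lemma part_one (k j : ℕ) (hk : 2 ≤ k) (hj : 1 ≤ j) (hjk : j < k)
    (ω : ℕ → ℝ) (hω : Tendsto ω atTop atTop) (p : ℕ → ℝ)
    (hp : ∀ᶠ n : ℕ in atTop, pjMinus k j n ≤ p n ∧
      p n ≤ ((j + 1 : ℝ) * Real.log n + Real.log (Real.log n) - ω n) *
        (Nat.factorial (k - j)) / (((k - j + 1 : ℕ) : ℝ) * (n : ℝ) ^ (k - j))) :
    ∃ c : ℝ, 0 < c ∧ ∀ᶠ n : ℕ in atTop,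
      c * Real.exp (ω n) ≤ expectMinus k j n (p n) := by
  obtain ⟨c, hc0, hb⟩ := p_bounds k j hjk ω hω p hp
  set m : ℝ := ((k - j + 1 : ℕ) : ℝ) with hm
  have hm0 : 0 < m := by rw [hm]; positivity
  set F : ℝ := (Nat.factorial (k - j) : ℝ) with hF
  have hF0 : 0 < F := by rw [hF]; positivity
  set a : ℝ := 1 / 2 * (j + 1 : ℝ) * F / m with ha
  have ha0 : 0 < a := by positivity
  refine ⟨(1 / 2) ^ (k + 1) / (Nat.factorial (k + 1)) * a * Real.exp (-1), by positivity, ?_⟩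
  filter_upwards [hb] with n ⟨hL, hn, hlow, hup, hhalf, hsm, hpu⟩
  set L := Real.log n with hLdef
  have hnp : (0 : ℝ) < n := by exact_mod_cast (by omega : 0 < n)
  have hL0 : 0 < L := by linarith
  have hp0 : 0 ≤ p n := le_trans (by positivity) hlow
  refine le_trans ?_ (expect_lower hk hj hjk (p n) hp0 (by linarith))
  set W := (j + 1 : ℝ) * L + Real.log L - ω n with hW
  have hN : (((k + 1 - j) * n.choose (k - j) : ℕ) : ℝ) * p n ≤ W := by
    have h1 : (((k + 1 - j) * n.choose (k - j) : ℕ) : ℝ) ≤ m * ((n : ℝ) ^ (k - j) / F) := by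
      rw [Nat.cast_mul, hm, show k + 1 - j = k - j + 1 by omega]
      gcongr
      exact Nat.choose_le_pow_div _ _
    calc _ ≤ m * ((n : ℝ) ^ (k - j) / F) * (W * F / (m * (n : ℝ) ^ (k - j))) := by gcongr
      _ = W := by field_simp
  have hexp : Real.exp (-(W + 1)) ≤ (1 - p n) ^ ((k + 1 - j) * n.choose (k - j)) := by
    refine le_trans (Real.exp_le_exp.mpr ?_) (one_sub_pow_lower (p n) hp0 hhalf _)
    have := mul_le_mul_of_nonneg_left hN (by positivity : 0 ≤ 2 * p n)
    linarith
  have hexp2 : Real.exp (-(W + 1)) = Real.exp (-1) * Real.exp (ω n) / ((n : ℝ) ^ (j + 1) * L) := by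
    rw [show -(W + 1) = (-1 + ω n) - (((j + 1 : ℕ) : ℝ) * L + Real.log L) by
      rw [hW]; push_cast; ring]
    rw [Real.exp_sub, Real.exp_add, Real.exp_add, Real.exp_log hL0, Real.exp_nat_mul,
      hLdef, Real.exp_log hnp]
  have hch : ((1 / 2) ^ (k + 1) * (n : ℝ) ^ (k + 1)) / (Nat.factorial (k + 1)) ≤
      (n.choose (k + 1) : ℝ) := by
    refine le_trans ?_ (Nat.pow_le_choose (α := ℝ) (k + 1) n)
    rw [← mul_pow]
    push_cast
    gcongr
    rw [Nat.cast_sub (by omega)]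
    have : ((2 * (k + 1) : ℕ) : ℝ) ≤ n := by exact_mod_cast hn
    push_cast at this ⊢
    linarith
  rw [hexp2] at hexp
  have hpow : (n : ℝ) ^ (k + 1) = (n : ℝ) ^ (k - j) * (n : ℝ) ^ (j + 1) := by
    rw [← pow_add]; congr 1; omega
  calc _ = ((1 / 2) ^ (k + 1) * (n : ℝ) ^ (k + 1)) / (Nat.factorial (k + 1)) *
        ((a * L / (n : ℝ) ^ (k - j)) *
          (Real.exp (-1) * Real.exp (ω n) / ((n : ℝ) ^ (j + 1) * L))) := by
        rw [hpow]; field_simp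
    _ ≤ _ := by gcongr

/-- Lemma 4.4: if `p_j^- ≤ p ≤ ((j+1)·log n + log log n - ω)·(k-j)!/((k-j+1)·n^{k-j})`
with `ω → ∞`, `ω = o(log n)`, then `E[X_-] = Ω(e^ω)` and whp `X_- = (1+o(1))·E[X_-]`. -/
theorem statement10 (k j : ℕ) (hk : 2 ≤ k) (hj : 1 ≤ j) (hjk : j < k)
    (ω : ℕ → ℝ) (hω : Tendsto ω atTop atTop)
    (hωo : Tendsto (fun n : ℕ => ω n / Real.log n) atTop (nhds 0))
    (p : ℕ → ℝ)
    (hp : ∀ᶠ n : ℕ in atTop, pjMinus k j n ≤ p n ∧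
      p n ≤ ((j + 1 : ℝ) * Real.log n + Real.log (Real.log n) - ω n) *
        (Nat.factorial (k - j)) / (((k - j + 1 : ℕ) : ℝ) * (n : ℝ) ^ (k - j))) :
    (∃ c : ℝ, 0 < c ∧ ∀ᶠ n : ℕ in atTop,
      c * Real.exp (ω n) ≤ expectMinus k j n (p n)) ∧
    ∀ ε : ℝ, 0 < ε →
      Tendsto (fun n : ℕ => birthMeasure n {t : Finset (Fin n) → ℝ |
        |(countMjMinus k j (complexAt k n t (p n)) : ℝ) - expectMinus k j n (p n)| ≤
          ε * expectMinus k j n (p n)}) atTop (nhds 1) := by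
  have h1 := part_one k j hk hj hjk ω hω p hp
  refine ⟨h1, fun ε hε => ?_⟩
  obtain ⟨c1, hc1, hE⟩ := h1
  obtain ⟨c, hc0, hb⟩ := p_bounds k j hjk ω hω p hp
  have hEtop : Tendsto (fun n : ℕ => expectMinus k j n (p n)) atTop atTop :=
    tendsto_atTop_mono' _ hE ((Real.tendsto_exp_atTop.comp hω).const_mul_atTop hc1)
  set q : ℕ → ℝ := fun n => (1 - p n) ^ ((k + 1 - j) ^ 2 * n ^ (k - j - 1)) with hq
  have hqlim : Tendsto q atTop (nhds 1) := by
    have hlim : Tendsto (fun n : ℕ => 1 - (((k + 1 - j : ℕ) : ℝ) ^ 2 * c) * (Real.log n / n))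
        atTop (nhds 1) := by
      have := (tendsto_log_div.const_mul (((k + 1 - j : ℕ) : ℝ) ^ 2 * c)).const_sub 1
      simpa using this
    refine tendsto_of_tendsto_of_tendsto_of_le_of_le' hlim tendsto_const_nhds ?_ ?_
    · filter_upwards [hb] with n ⟨hL, hn, hlow, hup, hhalf, hsm, hpu⟩
      have hnp : (0 : ℝ) < n := by exact_mod_cast (by omega : 0 < n)
      have hbern := one_add_mul_le_pow (a := -p n) (by linarith)
        ((k + 1 - j) ^ 2 * n ^ (k - j - 1))
      rw [← sub_eq_add_neg] at hbern
      refine le_trans ?_ hbern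
      have : (((k + 1 - j) ^ 2 * n ^ (k - j - 1) : ℕ) : ℝ) * p n ≤
          (((k + 1 - j : ℕ) : ℝ) ^ 2 * c) * (Real.log n / n) := by
        calc _ ≤ (((k + 1 - j) ^ 2 * n ^ (k - j - 1) : ℕ) : ℝ) *
              (c * Real.log n / (n : ℝ) ^ (k - j)) := by gcongr
          _ = _ := by
            have hs : (n : ℝ) ^ (k - j) = (n : ℝ) ^ (k - j - 1) * n := by
              rw [← pow_succ]; congr 1; omega
            rw [hs, Nat.cast_mul, Nat.cast_pow, Nat.cast_pow]
            field_simp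
      linarith
    · filter_upwards [hb] with n ⟨hL, hn, hlow, hup, hhalf, hsm, hpu⟩
      have hp0 : 0 ≤ p n := le_trans (by positivity) hlow
      exact pow_le_one₀ (by linarith) (by linarith)
  have hlim0 : Tendsto (fun n : ℕ => (1 / q n - 1 + 2 ^ (k + 1) /
      (q n * expectMinus k j n (p n))) / ε ^ 2) atTop (nhds 0) := by
    have a1 : Tendsto (fun n => 1 / q n - 1) atTop (nhds 0) := by
      have := (hqlim.inv₀ one_ne_zero).sub_const 1
      simpa using this
    have a2 : Tendsto (fun n : ℕ => (2 : ℝ) ^ (k + 1) / (q n * expectMinus k j n (p n)))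
        atTop (nhds 0) :=
      Tendsto.div_atTop tendsto_const_nhds (hqlim.pos_mul_atTop one_pos hEtop)
    simpa using (a1.add a2).div_const (ε ^ 2)
  have hlim1 : Tendsto (fun n : ℕ => 1 - ENNReal.ofReal ((1 / q n - 1 + 2 ^ (k + 1) /
      (q n * expectMinus k j n (p n))) / ε ^ 2)) atTop (nhds 1) := by
    have h0 := ENNReal.tendsto_ofReal hlim0
    rw [ENNReal.ofReal_zero] at h0
    have := ENNReal.Tendsto.sub (tendsto_const_nhds (x := (1 : ENNReal))) h0
      (Or.inl ENNReal.one_ne_top)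
    simpa using this
  refine tendsto_of_tendsto_of_tendsto_of_le_of_le' hlim1 tendsto_const_nhds ?_ ?_
  · filter_upwards [hb, hEtop.eventually_gt_atTop 0] with
      n ⟨hL, hn, hlow, hup, hhalf, hsm, hpu⟩ hEn
    have hp0 : 0 ≤ p n := le_trans (by positivity) hlow
    exact cheb hk hj hjk (p n) hp0 (by linarith) hEn ε hε (q n) rfl
  · exact Eventually.of_forall fun n => prob_le_one

end RSC
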